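/- arXiv:math/0606630 — 2 statements merged into one kernel-verified Lean document; each statement's English description precedes it below -/
import Mathlib

section
/- Let L, A, B, C, D be families of abelian groups indexed by pairs (u, q) of integers. Suppose: (i) for every (u, q) there are homomorphisms forming four-term sequences L(u, q+1) → A(u, q) → C(u+1, q+2) → L(u+1, q+1) and L(u, q+1) → B(u, q) → C(u+1, q+2) → L(u+1, q+1), each exact at its two middle terms; (ii) for every (u, q) there are homomorphisms forming four-term sequences L(u−1, q−1) → D(u−1, q−2) → A(u, q) → L(u, q−1) and L(u−1, q−1) → D(u−1, q−2) → B(u, q) → L(u, q−1), each exact at its two middle terms; (iii) L(u, q) = 0 unless u = 0 and q ∈ {−2, 0, 2}. Then for every pair (u, q) with (u, q) ∉ {(0, −1), (0, 1)}, the groups A(u, q) and B(u, q) are isomorphic. -/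
theorem iso_of_four_term {X Y Z W : Type} [AddCommGroup X] [AddCommGroup Y]
    [AddCommGroup Z] [AddCommGroup W] [Subsingleton X] [Subsingleton W]
    (h : ∃ (f : X →+ Y) (g : Y →+ Z) (h : Z →+ W),
      Function.Exact f g ∧ Function.Exact g h) : Nonempty (Y ≃+ Z) := by
  obtain ⟨f, g, h, hfg, hgh⟩ := h
  refine ⟨AddEquiv.ofBijective g ⟨?_, ?_⟩⟩
  · rw [injective_iff_map_eq_zero]
    intro y hy
    obtain ⟨x, rfl⟩ := (hfg y).1 hy
    rw [Subsingleton.elim x 0, map_zero]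
  · intro z
    exact (hgh z).1 (Subsingleton.elim _ _)

/-- Combining the two abstract diagrams of long exact sequences: if `A` and `B`
fit into four-term sequences with `C` (resolving one crossing first) and with `D`
(resolving the other crossing first), each exact at its two middle terms, and `L`
vanishes except in bidegrees `(0, -2)`, `(0, 0)`, `(0, 2)`, then
`A(u, q) ≅ B(u, q)` for all `(u, q)` outside `{(0, -1), (0, 1)}`. -/
theorem stmt2
    (L A B C D : ℤ → ℤ → Type)
    [∀ u q, AddCommGroup (L u q)] [∀ u q, AddCommGroup (A u q)]
    [∀ u q, AddCommGroup (B u q)] [∀ u q, AddCommGroup (C u q)]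
    [∀ u q, AddCommGroup (D u q)]
    (hAC : ∀ u q : ℤ, ∃ (f : L u (q + 1) →+ A u q) (g : A u q →+ C (u + 1) (q + 2))
        (h : C (u + 1) (q + 2) →+ L (u + 1) (q + 1)),
        Function.Exact f g ∧ Function.Exact g h)
    (hBC : ∀ u q : ℤ, ∃ (f : L u (q + 1) →+ B u q) (g : B u q →+ C (u + 1) (q + 2))
        (h : C (u + 1) (q + 2) →+ L (u + 1) (q + 1)),
        Function.Exact f g ∧ Function.Exact g h)
    (hDA : ∀ u q : ℤ, ∃ (f : L (u - 1) (q - 1) →+ D (u - 1) (q - 2))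
        (g : D (u - 1) (q - 2) →+ A u q) (h : A u q →+ L u (q - 1)),
        Function.Exact f g ∧ Function.Exact g h)
    (hDB : ∀ u q : ℤ, ∃ (f : L (u - 1) (q - 1) →+ D (u - 1) (q - 2))
        (g : D (u - 1) (q - 2) →+ B u q) (h : B u q →+ L u (q - 1)),
        Function.Exact f g ∧ Function.Exact g h)
    (hL : ∀ u q : ℤ, ¬(u = 0 ∧ (q = -2 ∨ q = 0 ∨ q = 2)) → Subsingleton (L u q)) :
    ∀ u q : ℤ, ¬(u = 0 ∧ (q = -1 ∨ q = 1)) → Nonempty (A u q ≃+ B u q) := by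
  intro u q hq
  by_cases hc : (u = 0 ∨ u = -1) ∧ (q = -3 ∨ q = -1 ∨ q = 1)
  · haveI := hL (u - 1) (q - 1) (by omega)
    haveI := hL u (q - 1) (by omega)
    obtain ⟨a⟩ := iso_of_four_term (hDA u q)
    obtain ⟨b⟩ := iso_of_four_term (hDB u q)
    exact ⟨a.symm.trans b⟩
  · haveI := hL u (q + 1) (by omega)
    haveI := hL (u + 1) (q + 1) (by omega)
    obtain ⟨a⟩ := iso_of_four_term (hAC u q)
    obtain ⟨b⟩ := iso_of_four_term (hBC u q)
    exact ⟨a.trans b.symm⟩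
end

section
/- Let L, A, B, C, D be families of abelian groups indexed by pairs (u, q) of integers. Suppose: (i) for every (u, q) there are homomorphisms forming four-term sequences L(u, q+1) → A(u, q) → C(u+1, q+2) → L(u+1, q+1) and L(u, q+1) → B(u, q) → C(u+1, q+2) → L(u+1, q+1), each exact at its two middle terms; (ii) for every (u, q) there are homomorphisms forming four-term sequences L(u−1, q−1) → D(u−1, q−2) → A(u, q) → L(u, q−1) and L(u−1, q−1) → D(u−1, q−2) → B(u, q) → L(u, q−1), each exact at its two middle terms; (iii) L(u, q) = 0 unless u = 0 and q ∈ {−2, 0, 2}, with L(0, −2) ≅ ℤ, L(0, 0) ≅ ℤ ⊕ ℤ, and L(0, 2) ≅ ℤ; (iv) every A(u, q) and B(u, q) is a finitely generated abelian group, and A(u, q) and B(u, q) are nonzero for only finitely many pairs (u, q); (v) for every q ∈ ℤ, Σ_u (−1)^u · rank(A(u, q)) = Σ_u (−1)^u · rank(B(u, q)). Then A(u, q) is isomorphic to B(u, q) for every pair (u, q). -/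
theorem aux_tors {D A L : Type} [AddCommGroup D] [AddCommGroup A] [AddCommGroup L]
    (g : D →+ A) (h : A →+ L) (hg : Function.Injective g) (e : Function.Exact g h)
    (hL : ∀ (n : ℤ) (x : L), n ≠ 0 → n • x = 0 → x = 0) :
    Nonempty (Submodule.torsion ℤ D ≃ₗ[ℤ] Submodule.torsion ℤ A) := by
  have key : ∀ x ∈ Submodule.torsion ℤ D, g.toIntLinearMap x ∈ Submodule.torsion ℤ A := by
    intro x hx
    rw [Submodule.mem_torsion_iff] at hx ⊢
    obtain ⟨a, ha⟩ := hx
    refine ⟨a, ?_⟩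
    have := congrArg g.toIntLinearMap ha
    rw [Submonoid.smul_def] at this ⊢
    rwa [map_smul, map_zero] at this
  refine ⟨LinearEquiv.ofBijective (g.toIntLinearMap.restrict key) ⟨?_, ?_⟩⟩
  · intro x y hxy
    apply Subtype.ext
    apply hg
    exact congrArg Subtype.val hxy
  · rintro ⟨y, hy⟩
    rw [Submodule.mem_torsion_iff] at hy
    obtain ⟨a, ha⟩ := hy
    rw [Submonoid.smul_def] at ha
    have ha0 : (a : ℤ) ≠ 0 := nonZeroDivisors.ne_zero a.2
    have h0 : h y = 0 := by
      apply hL a _ ha0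
      rw [← map_zsmul, ha, map_zero]
    obtain ⟨x, rfl⟩ := (e y).1 h0
    refine ⟨⟨x, ?_⟩, Subtype.ext rfl⟩
    rw [Submodule.mem_torsion_iff]
    refine ⟨a, ?_⟩
    rw [Submonoid.smul_def]
    apply hg
    rw [map_zsmul, ha, map_zero]

theorem aux_split (A : Type) [AddCommGroup A] [Module.Finite ℤ A] :
    Nonempty (A ≃ₗ[ℤ] Submodule.torsion ℤ A × (Fin (Module.finrank ℤ A) → ℤ)) := by
  obtain ⟨s, hs⟩ := Module.projective_lifting_property (Submodule.mkQ (Submodule.torsion ℤ A))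
    LinearMap.id (Submodule.mkQ_surjective _)
  have hr : Module.finrank ℤ (A ⧸ Submodule.torsion ℤ A) = Module.finrank ℤ A := by
    simp only [Module.finrank]
    rw [rank_quotient_eq_of_le_torsion le_rfl]
  refine ⟨(lequivProdOfRightSplitExact (f := s) (Submodule.torsion ℤ A).injective_subtype ?_ hs).symm.trans
    ((LinearEquiv.refl ℤ _).prodCongr (Module.finBasisOfFinrankEq ℤ _ hr).equivFun)⟩
  rw [Submodule.range_subtype, Submodule.ker_mkQ]

theorem aux_iso {A B : Type} [AddCommGroup A] [AddCommGroup B] [Module.Finite ℤ A]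
    [Module.Finite ℤ B] (hr : Module.finrank ℤ A = Module.finrank ℤ B)
    (e : Submodule.torsion ℤ A ≃ₗ[ℤ] Submodule.torsion ℤ B) : Nonempty (A ≃+ B) := by
  obtain ⟨a⟩ := aux_split A
  obtain ⟨b⟩ := aux_split B
  rw [← hr] at b
  exact ⟨(a.trans ((e.prodCongr (LinearEquiv.refl ℤ _)).trans b.symm)).toAddEquiv⟩

theorem aux_inj {X Y Z : Type} [AddCommGroup X] [AddCommGroup Y] [AddCommGroup Z]
    [Subsingleton X] (f : X →+ Y) (g : Y →+ Z)
    (e₁ : Function.Exact f g) : Function.Injective g := by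
  rw [injective_iff_map_eq_zero]
  intro y hy
  obtain ⟨x, rfl⟩ := (e₁ y).1 hy
  rw [Subsingleton.elim x 0, map_zero]

theorem aux_bij {X Y Z W : Type} [AddCommGroup X] [AddCommGroup Y] [AddCommGroup Z]
    [AddCommGroup W] [Subsingleton X] [Subsingleton W] (f : X →+ Y) (g : Y →+ Z) (h : Z →+ W)
    (e₁ : Function.Exact f g) (e₂ : Function.Exact g h) : Nonempty (Y ≃+ Z) := by
  refine ⟨AddEquiv.ofBijective g ⟨?_, ?_⟩⟩
  · exact aux_inj f g e₁
  · intro z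
    exact (e₂ z).1 (Subsingleton.elim _ _)


/-- The complete algebraic content of the paper's main lemma: two bigraded
families `A`, `B` of finitely generated abelian groups, nonzero in only
finitely many bidegrees, fitting into the two diagrams of four-term exact
sequences with `C` and `D` over `L` (the homology of the two-component trivial
link: `ℤ` in bidegrees `(0, ±2)`, `ℤ ⊕ ℤ` in bidegree `(0, 0)`, zero
otherwise), and with equal graded Euler characteristics, are isomorphic in
every bidegree. -/
theorem stmt6
    (L A B C D : ℤ → ℤ → Type)
    [∀ u q, AddCommGroup (L u q)] [∀ u q, AddCommGroup (A u q)]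
    [∀ u q, AddCommGroup (B u q)] [∀ u q, AddCommGroup (C u q)]
    [∀ u q, AddCommGroup (D u q)]
    (hAC : ∀ u q : ℤ, ∃ (f : L u (q + 1) →+ A u q) (g : A u q →+ C (u + 1) (q + 2))
        (h : C (u + 1) (q + 2) →+ L (u + 1) (q + 1)),
        Function.Exact f g ∧ Function.Exact g h)
    (hBC : ∀ u q : ℤ, ∃ (f : L u (q + 1) →+ B u q) (g : B u q →+ C (u + 1) (q + 2))
        (h : C (u + 1) (q + 2) →+ L (u + 1) (q + 1)),
        Function.Exact f g ∧ Function.Exact g h)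
    (hDA : ∀ u q : ℤ, ∃ (f : L (u - 1) (q - 1) →+ D (u - 1) (q - 2))
        (g : D (u - 1) (q - 2) →+ A u q) (h : A u q →+ L u (q - 1)),
        Function.Exact f g ∧ Function.Exact g h)
    (hDB : ∀ u q : ℤ, ∃ (f : L (u - 1) (q - 1) →+ D (u - 1) (q - 2))
        (g : D (u - 1) (q - 2) →+ B u q) (h : B u q →+ L u (q - 1)),
        Function.Exact f g ∧ Function.Exact g h)
    (hL : ∀ u q : ℤ, ¬(u = 0 ∧ (q = -2 ∨ q = 0 ∨ q = 2)) → Subsingleton (L u q))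
    (hLm2 : Nonempty (L 0 (-2) ≃+ ℤ))
    (hL0 : Nonempty (L 0 0 ≃+ ℤ × ℤ))
    (hL2 : Nonempty (L 0 2 ≃+ ℤ))
    (hAfg : ∀ u q : ℤ, AddGroup.FG (A u q)) (hBfg : ∀ u q : ℤ, AddGroup.FG (B u q))
    (hAfin : {p : ℤ × ℤ | Nontrivial (A p.1 p.2)}.Finite)
    (hBfin : {p : ℤ × ℤ | Nontrivial (B p.1 p.2)}.Finite)
    (hχ : ∀ q : ℤ,
      (∑ᶠ u : ℤ, (Int.negOnePow u : ℤ) * (Module.finrank ℤ (A u q) : ℤ)) =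
      (∑ᶠ u : ℤ, (Int.negOnePow u : ℤ) * (Module.finrank ℤ (B u q) : ℤ))) :
    ∀ u q : ℤ, Nonempty (A u q ≃+ B u q) := by
  have hne : ∀ u q : ℤ, u ≠ 0 → Nonempty (A u q ≃+ B u q) := by
    intro u q hu
    have : Subsingleton (L u (q + 1)) := hL _ _ (by tauto)
    have : Subsingleton (L u (q - 1)) := hL _ _ (by tauto)
    by_cases h1 : u = 1
    · have : Subsingleton (L (u + 1) (q + 1)) := hL _ _ (by omega)
      obtain ⟨f, g, h, e₁, e₂⟩ := hAC u q
      obtain ⟨f', g', h', e₁', e₂'⟩ := hBC u q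
      obtain ⟨a⟩ := aux_bij f g h e₁ e₂
      obtain ⟨b⟩ := aux_bij f' g' h' e₁' e₂'
      exact ⟨a.trans b.symm⟩
    · have : Subsingleton (L (u - 1) (q - 1)) := hL _ _ (by omega)
      obtain ⟨f, g, h, e₁, e₂⟩ := hDA u q
      obtain ⟨f', g', h', e₁', e₂'⟩ := hDB u q
      obtain ⟨a⟩ := aux_bij f g h e₁ e₂
      obtain ⟨b⟩ := aux_bij f' g' h' e₁' e₂'
      exact ⟨a.symm.trans b⟩
  intro u q
  by_cases hu : u = 0
  swap
  · exact hne u q hu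
  subst hu
  have : Module.Finite ℤ (A 0 q) := Module.Finite.iff_addGroup_fg.2 (hAfg 0 q)
  have : Module.Finite ℤ (B 0 q) := Module.Finite.iff_addGroup_fg.2 (hBfg 0 q)
  have hr : Module.finrank ℤ (A 0 q) = Module.finrank ℤ (B 0 q) := by
    have fin : ∀ (M : ℤ → ℤ → Type) [∀ u q, AddCommGroup (M u q)],
        {p : ℤ × ℤ | Nontrivial (M p.1 p.2)}.Finite →
        (Function.support fun u : ℤ =>
          (Int.negOnePow u : ℤ) * (Module.finrank ℤ (M u q) : ℤ)).Finite := by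
      intro M _ hM
      refine (hM.image Prod.fst).subset ?_
      intro u hu
      refine ⟨(u, q), ?_, rfl⟩
      by_contra hn
      have : Subsingleton (M u q) := not_nontrivial_iff_subsingleton.1 hn
      apply hu
      simp [Module.finrank_zero_of_subsingleton]
    have h1 := sub_eq_zero.2 (hχ q)
    rw [← finsum_sub_distrib (fin A hAfin) (fin B hBfin), finsum_eq_single _ 0] at h1
    · simp at h1
      omega
    · intro u hu
      obtain ⟨e⟩ := hne u q hu
      rw [e.toIntLinearEquiv.finrank_eq, sub_self]
  have hLt : ∀ (r : ℤ) (n : ℤ) (x : L 0 r), n ≠ 0 → n • x = 0 → x = 0 := by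
    intro r n x hn hx
    by_cases hr : r = -2 ∨ r = 0 ∨ r = 2
    · rcases hr with rfl | rfl | rfl
      · obtain ⟨e⟩ := hLm2
        have := congrArg e hx
        rw [map_zsmul, map_zero] at this
        exact e.map_eq_zero_iff.1 ((smul_eq_zero.1 this).resolve_left hn)
      · obtain ⟨e⟩ := hL0
        have := congrArg e hx
        rw [map_zsmul, map_zero] at this
        exact e.map_eq_zero_iff.1 ((smul_eq_zero.1 this).resolve_left hn)
      · obtain ⟨e⟩ := hL2
        have := congrArg e hx
        rw [map_zsmul, map_zero] at this
        exact e.map_eq_zero_iff.1 ((smul_eq_zero.1 this).resolve_left hn)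
    · have := hL 0 r (by tauto)
      exact Subsingleton.elim _ _
  have : Subsingleton (L (0 - 1) (q - 1)) := hL _ _ (by omega)
  obtain ⟨f, g, h, e₁, e₂⟩ := hDA 0 q
  obtain ⟨f', g', h', e₁', e₂'⟩ := hDB 0 q
  obtain ⟨a⟩ := aux_tors g h (aux_inj f g e₁) e₂ (hLt _)
  obtain ⟨b⟩ := aux_tors g' h' (aux_inj f' g' e₁') e₂' (hLt _)
  exact aux_iso hr (a.symm.trans b)
end
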